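/- For every n ≥ 1, there is a bijection between the set of labeled planar binary trees with n leaves that avoid the three patterns x(*, x(*,*)), x(*, y(*,*)), y(*, y(*,*)) and the set of (unlabeled) planar binary trees with n internal vertices (equivalently, full binary trees with n + 1 leaves). -/

import Mathlib

/-- Planar binary trees with internal vertices labeled by one of two symbols `x`, `y`. -/
inductive LTree : Type
  | leaf : LTree
  | x : LTree → LTree → LTree
  | y : LTree → LTree → LTree

namespace LTree

/-- Number of leaves. -/
def leaves : LTree → ℕ
  | leaf => 1
  | x u v => u.leaves + v.leaves
  | y u v => u.leaves + v.leaves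

/-- The subtree relation. -/
inductive Subtree : LTree → LTree → Prop
  | refl (t : LTree) : Subtree t t
  | xl {s u v : LTree} : Subtree s u → Subtree s (x u v)
  | xr {s u v : LTree} : Subtree s v → Subtree s (x u v)
  | yl {s u v : LTree} : Subtree s u → Subtree s (y u v)
  | yr {s u v : LTree} : Subtree s v → Subtree s (y u v)

/-- A tree matches (at the root) one of the three forbidden patterns
`x(*, x(*,*))`, `x(*, y(*,*))`, `y(*, y(*,*))`. -/
def IsBadZin : LTree → Prop
  | x _ (x _ _) => True
  | x _ (y _ _) => True
  | y _ (y _ _) => True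
  | _ => False

/-- A tree avoids the three patterns iff no subtree matches one of them. -/
def AvoidsZin (t : LTree) : Prop := ∀ s : LTree, Subtree s t → ¬ IsBadZin s

end LTree

/-- Unlabeled planar binary trees. -/
inductive PTree : Type
  | leaf : PTree
  | node : PTree → PTree → PTree

namespace PTree

/-- Number of internal vertices. -/
def internal : PTree → ℕ
  | leaf => 0
  | node u v => u.internal + v.internal + 1

end PTree

/-- Encoding of labeled trees (meaningful on the avoiding ones). -/
def LTree.toP : LTree → PTree
  | .leaf => .node .leaf .leaf
  | .x u _ => .node u.toP .leaf
  | .y u .leaf => .node .leaf u.toP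
  | .y u (.x v _) => .node u.toP v.toP
  | .y _ (.y _ _) => .leaf

/-- Decoding of nonempty binary trees. -/
def PTree.toL : PTree → LTree
  | .leaf => .leaf
  | .node .leaf .leaf => .leaf
  | .node (.node a b) .leaf => .x (PTree.toL (.node a b)) .leaf
  | .node .leaf (.node a b) => .y (PTree.toL (.node a b)) .leaf
  | .node (.node a b) (.node c d) =>
      .y (PTree.toL (.node a b)) (.x (PTree.toL (.node c d)) .leaf)

/-- Inductive description of the avoiding trees. -/
inductive LTree.Good : LTree → Prop
  | leaf : Good .leaf
  | x {u : LTree} : Good u → Good (.x u .leaf)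
  | y {u : LTree} : Good u → Good (.y u .leaf)
  | yx {u v : LTree} : Good u → Good v → Good (.y u (.x v .leaf))

theorem LTree.Good.avoids {t : LTree} (h : t.Good) : t.AvoidsZin := by
  have hl : ∀ s, LTree.Subtree s .leaf → ¬ s.IsBadZin := by
    intro s hs
    cases hs
    simp [LTree.IsBadZin]
  induction h with
  | leaf => exact hl
  | x _ ih =>
    intro s hs
    cases hs with
    | refl => simp [LTree.IsBadZin]
    | xl h => exact ih s h
    | xr h => exact hl s h
  | y _ ih =>
    intro s hs
    cases hs with
    | refl => simp [LTree.IsBadZin]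
    | yl h => exact ih s h
    | yr h => exact hl s h
  | yx _ _ ih ih' =>
    intro s hs
    cases hs with
    | refl => simp [LTree.IsBadZin]
    | yl h => exact ih s h
    | yr h =>
      cases h with
      | refl => simp [LTree.IsBadZin]
      | xl h => exact ih' s h
      | xr h => exact hl s h

theorem LTree.AvoidsZin.xl {u v : LTree} (h : (LTree.x u v).AvoidsZin) : u.AvoidsZin :=
  fun s hs => h s (.xl hs)

theorem LTree.AvoidsZin.yl {u v : LTree} (h : (LTree.y u v).AvoidsZin) : u.AvoidsZin :=
  fun s hs => h s (.yl hs)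

theorem LTree.AvoidsZin.yr {u v : LTree} (h : (LTree.y u v).AvoidsZin) : v.AvoidsZin :=
  fun s hs => h s (.yr hs)

theorem LTree.AvoidsZin.good {t : LTree} (h : t.AvoidsZin) : t.Good := by
  induction t with
  | leaf => exact .leaf
  | x u v ihu ihv =>
    have hb := h _ (.refl _)
    cases v with
    | leaf => exact .x (ihu h.xl)
    | x a b => exact absurd trivial hb
    | y a b => exact absurd trivial hb
  | y u v ihu ihv =>
    have hb := h _ (.refl _)
    cases v with
    | leaf => exact .y (ihu h.yl)
    | x a b =>
      cases ihv h.yr with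
      | x ha => exact .yx (ihu h.yl) ha
    | y a b => exact absurd trivial hb

theorem LTree.Good.toP_spec {t : LTree} (h : t.Good) :
    t.toP.internal = t.leaves ∧ t.toP.toL = t ∧ ∃ a b, t.toP = .node a b := by
  induction h with
  | leaf => simp [LTree.toP, PTree.toL, PTree.internal, LTree.leaves]
  | x _ ih =>
    obtain ⟨h1, h2, a, b, h3⟩ := ih
    rw [h3] at h1 h2
    simp [LTree.toP, PTree.toL, PTree.internal, LTree.leaves, h3, h2, ← h1]
  | y _ ih =>
    obtain ⟨h1, h2, a, b, h3⟩ := ih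
    rw [h3] at h1 h2
    simp [LTree.toP, PTree.toL, PTree.internal, LTree.leaves, h3, h2, ← h1]
  | yx _ _ ih ih' =>
    obtain ⟨h1, h2, a, b, h3⟩ := ih
    obtain ⟨h1', h2', a', b', h3'⟩ := ih'
    rw [h3] at h1 h2
    rw [h3'] at h1' h2'
    simp [LTree.toP, PTree.toL, PTree.internal, LTree.leaves, h3, h2, ← h1, h3', h2', ← h1']
    try omega

theorem PTree.toL_spec (p : PTree) (hp : p ≠ .leaf) : p.toL.Good ∧ p.toL.toP = p := by
  induction p with
  | leaf => exact absurd rfl hp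
  | node a b iha ihb =>
    cases a with
    | leaf =>
      cases b with
      | leaf => exact ⟨by simpa [PTree.toL] using LTree.Good.leaf, by simp [PTree.toL, LTree.toP]⟩
      | node c d =>
        obtain ⟨h1, h2⟩ := ihb (by simp)
        rw [PTree.toL]
        exact ⟨.y h1, by rw [LTree.toP, h2]⟩
    | node e f =>
      obtain ⟨g1, g2⟩ := iha (by simp)
      cases b with
      | leaf =>
        rw [PTree.toL]
        exact ⟨.x g1, by rw [LTree.toP, g2]⟩
      | node c d =>
        obtain ⟨h1, h2⟩ := ihb (by simp)
        rw [PTree.toL]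
        exact ⟨.yx g1 h1, by rw [LTree.toP, g2, h2]⟩

open LTree in
/-- For every `n ≥ 1` there is a bijection between labeled planar binary trees with
`n` leaves avoiding the three patterns `x(*, x(*,*))`, `x(*, y(*,*))`, `y(*, y(*,*))`
and unlabeled planar binary trees with `n` internal vertices. -/
theorem noncomZin_bijection_with_planar_binary_trees :
    ∀ n : ℕ, 1 ≤ n →
      Nonempty ({t : LTree // t.leaves = n ∧ AvoidsZin t} ≃
                {b : PTree // b.internal = n}) := by
  intro n hn
  have key : ∀ b : PTree, b.internal = n → b ≠ .leaf := by
    rintro b hb rfl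
    simp only [PTree.internal] at hb
    omega
  refine ⟨{
    toFun := fun t => ⟨t.1.toP, t.2.2.good.toP_spec.1.trans t.2.1⟩
    invFun := fun b => ⟨b.1.toL, ?_, (b.1.toL_spec (key _ b.2)).1.avoids⟩
    left_inv := fun t => Subtype.ext t.2.2.good.toP_spec.2.1
    right_inv := fun b => Subtype.ext (b.1.toL_spec (key _ b.2)).2 }⟩
  obtain ⟨h1, h2⟩ := b.1.toL_spec (key _ b.2)
  rw [← h1.toP_spec.1, h2, b.2]
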